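/- Single-letterization step in the converse of Theorem 1: In the interactive coding setup, for every odd j ∈ {1,…,t}, n·R_j ≥ H(M_j) ≥ I(X^n; M_j | M^{j−1}, Y^n) = Σ_{i=1}^n [ H(X_i | X^{i−1}, M^{j−1}, Y_i^n) − H(X_i | X^{i−1}, M^{j}, Y_i^n) ] = Σ_{i=1}^n I(X_i; M_j | X^{i−1}, M^{j−1}, Y_i^n), where the displayed equality of the conditional-entropy telescoping sum with I(X^n; M_j | M^{j−1}, Y^n) uses the chain rule and the Markov chains X_i − (X^{i−1}, M^k, Y_i^n) − Y^{i−1} for k = j−1 and k = j. -/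

import Mathlib

/-!
The bound `H(M_j) ≤ n R_j` is Gibbs' inequality against the uniform distribution (`ent_le_of_card`),
and `I(X^n; M_j | M^{j-1}, Y^n) ≤ H(M_j)` is subadditivity of entropy (`ent_pair_le`), since `M_j`
is a function of `(X^n, Y^n)`.

All identities between entropies are reduced to one fact: the entropy of `f` depends only on the
partition of the sample space that `f` induces (`ent_congr`), because
`H(f) = -∑ ω, μ ω * log P(f = f ω)` (`ent_eq_sum`).

The single-letterization itself rests on the Markov chain `X_i − (X^{i−1}, M^k, Y_i^n) − Y^{i−1}`
(`condIndep_of_rectangle`). Take two independent realizations `s`, `s'` of the source that agree on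
`(X^{i−1}, M^k, Y_i^n)` and exchange their coordinates of index `< i`. Since `X^{i−1}` and `Y_i^n`
agree, this turns `(x, y), (x', y')` into `(x, y'), (x', y)`, and it preserves the product
probability. The messages exchanged so far have the rectangle property: if `(x, y)` and `(x', y')`
produce the same transcript, then so does `(x, y')` (`transcript_rectangle`). Hence the exchange
preserves the transcript, which yields the conditional independence. The chain rule then telescopes
(`condEnt_eq_sum`), once for the transcript `M^{j−1}` and once for `M^j`.
-/

open scoped Classical BigOperators

noncomputable section

namespace IFC

variable {Ω : Type*} [Fintype Ω]

/-- Probability of an event under a pmf on a finite sample space. -/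
def pr (μ : Ω → ℝ) (E : Ω → Prop) : ℝ := ∑ ω, if E ω then μ ω else 0

/-- `μ` is a probability mass function. -/
def IsPMF (μ : Ω → ℝ) : Prop := (∀ ω, 0 ≤ μ ω) ∧ ∑ ω, μ ω = 1

/-- Shannon entropy (base 2) of the finite-valued random variable `f`. -/
def ent {A : Type*} [Fintype A] (μ : Ω → ℝ) (f : Ω → A) : ℝ :=
  ∑ a : A, -(pr μ fun ω => f ω = a) * Real.logb 2 (pr μ fun ω => f ω = a)

/-- Conditional entropy `H(f | g)`. -/
def condEnt {A B : Type*} [Fintype A] [Fintype B] (μ : Ω → ℝ) (f : Ω → A) (g : Ω → B) : ℝ :=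
  ent μ (fun ω => (f ω, g ω)) - ent μ g

/-- Conditional mutual information `I(f; g | h)`. -/
def condMI {A B C : Type*} [Fintype A] [Fintype B] [Fintype C]
    (μ : Ω → ℝ) (f : Ω → A) (g : Ω → B) (h : Ω → C) : ℝ :=
  condEnt μ f h - condEnt μ f (fun ω => (g ω, h ω))

/-- Markov chain `f − g − h`: `f` and `h` are conditionally independent given `g`. -/
def CondIndep {A B C : Type*} (μ : Ω → ℝ) (f : Ω → A) (g : Ω → B) (h : Ω → C) : Prop :=
  ∀ a b c, pr μ (fun ω => f ω = a ∧ g ω = b ∧ h ω = c) * pr μ (fun ω => g ω = b)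
    = pr μ (fun ω => f ω = a ∧ g ω = b) * pr μ (fun ω => g ω = b ∧ h ω = c)

variable {X Y ZA ZB HZA HZB HWA HWB : Type*}

/-- The i.i.d. `n`-letter joint source distribution. -/
def prodPMF (p : X × Y → ℝ) (n : ℕ) : (Fin n → X × Y) → ℝ := fun s => ∏ i, p (s i)

/-- First components of an `n`-letter source realization. -/
def xs {n : ℕ} (s : Fin n → X × Y) : Fin n → X := fun i => (s i).1

/-- Second components of an `n`-letter source realization. -/
def ys {n : ℕ} (s : Fin n → X × Y) : Fin n → Y := fun i => (s i).2

/-- Valid sequential interactive encoding starting from terminal A: messages of odd rounds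
(those with even index `j.val`, i.e. round number `j.val + 1` odd) are functions of `x` and
the previous messages only, and messages of even rounds are functions of `y` and the previous
messages only. -/
def ValidCode {t n : ℕ} {k : Fin t → ℕ}
    (msg : (Fin n → X) → (Fin n → Y) → ∀ j : Fin t, Fin (k j)) : Prop :=
  ∀ j : Fin t,
    (Even j.val → ∀ x y y', (∀ i, i < j → msg x y i = msg x y' i) → msg x y j = msg x y' j) ∧
    (Odd j.val → ∀ x x' y, (∀ i, i < j → msg x y i = msg x' y i) → msg x y j = msg x' y j)

/-- Per-letter average expected distortion between the symbolwise values `v` and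
reconstructions `w`. -/
def avgDist [Fintype X] [Fintype Y] {A B : Type*} (p : X × Y → ℝ) (n : ℕ)
    (v : (Fin n → X × Y) → Fin n → A) (w : (Fin n → X × Y) → Fin n → B)
    (d : A → B → ℝ) : ℝ :=
  (1 / (n : ℝ)) * ∑ i : Fin n, ∑ s : Fin n → X × Y, prodPMF p n s * d (v s i) (w s i)

/-- Operational achievability of `(R, D_A, D_B, D_AB, D_BA)` with `t` rounds of sequential
communication starting from terminal A, under constrained reconstruction constraints. -/
def Achievable [Fintype X] [Fintype Y] [Fintype HZA] [Fintype HZB] [Fintype HWA] [Fintype HWB]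
    (p : X × Y → ℝ) (fA : X × Y → ZA) (fB : X × Y → ZB)
    (dA : ZA → HZA → ℝ) (dB : ZB → HZB → ℝ)
    (dAB : HZA → HWB → ℝ) (dBA : HZB → HWA → ℝ)
    (t : ℕ) (R : Fin t → ℝ) (DA DB DAB DBA : ℝ) : Prop :=
  ∀ ε : ℝ, 0 < ε → ∃ N : ℕ, ∀ n : ℕ, N ≤ n →
    ∃ (k : Fin t → ℕ) (msg : (Fin n → X) → (Fin n → Y) → ∀ j : Fin t, Fin (k j))
      (gA : (Fin n → X) → (∀ j : Fin t, Fin (k j)) → Fin n → HZA)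
      (gB : (Fin n → Y) → (∀ j : Fin t, Fin (k j)) → Fin n → HZB)
      (ψA : (Fin n → X) → (∀ j : Fin t, Fin (k j)) → Fin n → HWA)
      (ψB : (Fin n → Y) → (∀ j : Fin t, Fin (k j)) → Fin n → HWB),
      ValidCode msg ∧
      (∀ j : Fin t, (k j : ℝ) ≤ (2 : ℝ) ^ ((n : ℝ) * (R j + ε))) ∧
      avgDist p n (fun s i => fA (s i)) (fun s i => gA (xs s) (msg (xs s) (ys s)) i) dA
        ≤ DA + ε ∧
      avgDist p n (fun s i => gA (xs s) (msg (xs s) (ys s)) i)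
        (fun s i => ψB (ys s) (msg (xs s) (ys s)) i) dAB ≤ DAB + ε ∧
      avgDist p n (fun s i => fB (s i)) (fun s i => gB (ys s) (msg (xs s) (ys s)) i) dB
        ≤ DB + ε ∧
      avgDist p n (fun s i => gB (ys s) (msg (xs s) (ys s)) i)
        (fun s i => ψA (xs s) (msg (xs s) (ys s)) i) dBA ≤ DBA + ε

/-- A single-letter witness (auxiliary random variables `W_A ∈ Fin a`, `W_B ∈ Fin b`,
`U_j ∈ Fin (m j)` jointly distributed with `(X, Y) ∼ p` via the joint pmf `q`) certifying
that the rate vector `R` lies in the single-letter region of Theorem 1. -/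
def SLWitness [Fintype X] [Fintype Y] (p : X × Y → ℝ)
    (fA : X × Y → ZA) (fB : X × Y → ZB)
    (dA : ZA → HZA → ℝ) (dB : ZB → HZB → ℝ)
    (dAB : HZA → HWB → ℝ) (dBA : HZB → HWA → ℝ)
    (t : ℕ) (R : Fin t → ℝ) (DA DB DAB DBA : ℝ)
    (a b : ℕ) (m : Fin t → ℕ)
    (q : X × Y × Fin a × Fin b × (∀ j : Fin t, Fin (m j)) → ℝ) : Prop :=
  IsPMF q ∧
  -- (X, Y) ∼ p
  (∀ x y, pr q (fun ω => ω.1 = x ∧ ω.2.1 = y) = p (x, y)) ∧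
  -- Markov chain W_A − X − Y − W_B
  CondIndep q (fun ω => ω.2.2.1) (fun ω => ω.1) (fun ω => (ω.2.1, ω.2.2.2.1)) ∧
  CondIndep q (fun ω => (ω.1, ω.2.2.1)) (fun ω => ω.2.1) (fun ω => ω.2.2.2.1) ∧
  (∀ j : Fin t,
    (Even j.val →
      CondIndep q (fun ω => ω.2.2.2.2 j)
        (fun ω => (ω.1, ω.2.2.1, fun i : {i : Fin t // i < j} => ω.2.2.2.2 i.1))
        (fun ω => ω.2.1) ∧
      condMI q (fun ω => ω.1) (fun ω => ω.2.2.2.2 j)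
        (fun ω => (ω.2.1, fun i : {i : Fin t // i < j} => ω.2.2.2.2 i.1)) ≤ R j) ∧
    (Odd j.val →
      CondIndep q (fun ω => ω.2.2.2.2 j)
        (fun ω => (ω.2.1, ω.2.2.2.1, fun i : {i : Fin t // i < j} => ω.2.2.2.2 i.1))
        (fun ω => ω.1) ∧
      condMI q (fun ω => ω.2.1) (fun ω => ω.2.2.2.2 j)
        (fun ω => (ω.1, fun i : {i : Fin t // i < j} => ω.2.2.2.2 i.1)) ≤ R j)) ∧
  ∃ (gA : X × Fin a × (∀ j : Fin t, Fin (m j)) → HZA)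
    (gB : Y × Fin b × (∀ j : Fin t, Fin (m j)) → HZB)
    (ψA : X × Fin a × (∀ j : Fin t, Fin (m j)) → HWA)
    (ψB : Y × Fin b × (∀ j : Fin t, Fin (m j)) → HWB),
    (∑ ω, q ω * dA (fA (ω.1, ω.2.1)) (gA (ω.1, ω.2.2.1, ω.2.2.2.2))) ≤ DA ∧
    (∑ ω, q ω * dAB (gA (ω.1, ω.2.2.1, ω.2.2.2.2)) (ψB (ω.2.1, ω.2.2.2.1, ω.2.2.2.2))) ≤ DAB ∧
    (∑ ω, q ω * dB (fB (ω.1, ω.2.1)) (gB (ω.2.1, ω.2.2.2.1, ω.2.2.2.2))) ≤ DB ∧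
    (∑ ω, q ω * dBA (gB (ω.2.1, ω.2.2.2.1, ω.2.2.2.2)) (ψA (ω.1, ω.2.2.1, ω.2.2.2.2))) ≤ DBA

/-- The single-letter region 𝓢^{(t)} of Theorem 1. -/
def SingleLetter [Fintype X] [Fintype Y] (p : X × Y → ℝ)
    (fA : X × Y → ZA) (fB : X × Y → ZB)
    (dA : ZA → HZA → ℝ) (dB : ZB → HZB → ℝ)
    (dAB : HZA → HWB → ℝ) (dBA : HZB → HWA → ℝ)
    (t : ℕ) (R : Fin t → ℝ) (DA DB DAB DBA : ℝ) : Prop :=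
  ∃ (a b : ℕ) (m : Fin t → ℕ)
    (q : X × Y × Fin a × Fin b × (∀ j : Fin t, Fin (m j)) → ℝ),
    SLWitness p fA fB dA dB dAB dBA t R DA DB DAB DBA a b m q

/-! ### Entropy on a finite sample space -/

lemma pr_nonneg {μ : Ω → ℝ} (hμ : ∀ ω, 0 ≤ μ ω) (E : Ω → Prop) : 0 ≤ pr μ E := by
  unfold pr
  refine Finset.sum_nonneg fun ω _ => ?_
  split_ifs
  · exact hμ ω
  · exact le_rfl

lemma pr_mono {μ : Ω → ℝ} (hμ : ∀ ω, 0 ≤ μ ω) {E F : Ω → Prop} (h : ∀ ω, E ω → F ω) :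
    pr μ E ≤ pr μ F := by
  unfold pr
  refine Finset.sum_le_sum fun ω _ => ?_
  by_cases hE : E ω
  · simp [hE, h ω hE]
  · by_cases hF : F ω <;> simp [hE, hF, hμ ω]

lemma pr_pos {μ : Ω → ℝ} (hμ : ∀ ω, 0 ≤ μ ω) {E : Ω → Prop} {ω : Ω} (hω : 0 < μ ω) (hE : E ω) :
    0 < pr μ E := by
  refine lt_of_lt_of_le hω ?_
  have h := Finset.single_le_sum (f := fun ω => if E ω then μ ω else 0)
    (fun ω _ => by split_ifs <;> simp [hμ ω]) (Finset.mem_univ ω)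
  simpa [pr, hE] using h

/-- The law of the unconscious statistician, for the pushforward of `μ` under `f`. -/
lemma sum_pr_mul {A : Type*} [Fintype A] (μ : Ω → ℝ) (f : Ω → A) (G : A → ℝ) :
    ∑ a, pr μ (fun ω => f ω = a) * G a = ∑ ω, μ ω * G (f ω) := by
  simp only [pr, Finset.sum_mul]
  rw [Finset.sum_comm]
  refine Finset.sum_congr rfl fun ω _ => ?_
  simp [ite_mul]

lemma sum_pr {A : Type*} [Fintype A] (μ : Ω → ℝ) (f : Ω → A) :
    ∑ a, pr μ (fun ω => f ω = a) = ∑ ω, μ ω := by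
  simpa using sum_pr_mul μ f (fun _ => 1)

lemma ent_eq_sum {A : Type*} [Fintype A] (μ : Ω → ℝ) (f : Ω → A) :
    ent μ f = -∑ ω, μ ω * Real.logb 2 (pr μ fun ω' => f ω' = f ω) := by
  rw [← sum_pr_mul μ f (fun a => Real.logb 2 (pr μ fun ω' => f ω' = a)), ← Finset.sum_neg_distrib]
  simp [ent]

/-- Entropy depends only on the partition of the sample space induced by the random variable. -/
lemma ent_congr {A B : Type*} [Fintype A] [Fintype B] (μ : Ω → ℝ) {f : Ω → A} {g : Ω → B}
    (h : ∀ ω ω', f ω = f ω' ↔ g ω = g ω') : ent μ f = ent μ g := by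
  simp only [ent_eq_sum, h]

/-- Gibbs' inequality: the cross entropy relative to a (sub)probability `q` is at least the
entropy. -/
lemma ent_le_crossEntropy {A : Type*} [Fintype A] {μ : Ω → ℝ} (hμ : IsPMF μ) (f : Ω → A)
    (q : A → ℝ) (hq : ∀ a, 0 ≤ q a) (hq1 : ∑ a, q a ≤ 1)
    (hpos : ∀ a, 0 < pr μ (fun ω => f ω = a) → 0 < q a) :
    ent μ f ≤ -∑ a, pr μ (fun ω => f ω = a) * Real.logb 2 (q a) := by
  have hlog2 : 0 < Real.log 2 := Real.log_pos one_lt_two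
  have key : ∀ a, pr μ (fun ω => f ω = a) * Real.log (q a)
      - pr μ (fun ω => f ω = a) * Real.log (pr μ (fun ω => f ω = a))
      ≤ q a - pr μ (fun ω => f ω = a) := by
    intro a
    rcases (pr_nonneg hμ.1 (fun ω => f ω = a)).eq_or_lt with h0 | h0
    · simp [← h0, hq a]
    · have hqa := hpos a h0
      have h1 := Real.log_le_sub_one_of_pos (div_pos hqa h0)
      rw [Real.log_div hqa.ne' h0.ne'] at h1
      have h2 := mul_le_mul_of_nonneg_left h1 h0.le
      have h3 : pr μ (fun ω => f ω = a) * (q a / pr μ (fun ω => f ω = a) - 1)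
          = q a - pr μ (fun ω => f ω = a) := by
        field_simp
      linarith
  have hsum := Finset.sum_le_sum fun a (_ : a ∈ Finset.univ) => key a
  rw [Finset.sum_sub_distrib, Finset.sum_sub_distrib, sum_pr, hμ.2] at hsum
  have e1 : ∑ a, pr μ (fun ω => f ω = a) * Real.logb 2 (q a)
      = (∑ a, pr μ (fun ω => f ω = a) * Real.log (q a)) / Real.log 2 := by
    simp only [Real.logb, Finset.sum_div, mul_div_assoc]
  have e2 : ent μ f = -((∑ a, pr μ (fun ω => f ω = a)
      * Real.log (pr μ (fun ω => f ω = a))) / Real.log 2) := by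
    simp only [ent, Real.logb, Finset.sum_div, mul_div_assoc, neg_mul, Finset.sum_neg_distrib]
  rw [e1, e2, neg_le_neg_iff]
  exact div_le_div_of_nonneg_right (by linarith) hlog2.le

/-- A random variable with at most `2 ^ r` values has entropy at most `r`. -/
lemma ent_le_of_card {m : ℕ} {μ : Ω → ℝ} (hμ : IsPMF μ) (f : Ω → Fin m) {r : ℝ}
    (hm : (m : ℝ) ≤ 2 ^ r) : ent μ f ≤ r := by
  have hr : (0 : ℝ) < 2 ^ r := Real.rpow_pos_of_pos two_pos r
  have h := ent_le_crossEntropy hμ f (fun _ => ((2 : ℝ) ^ r)⁻¹) (fun _ => (inv_pos.2 hr).le)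
    (by
      rw [Finset.sum_const, Finset.card_univ, Fintype.card_fin, nsmul_eq_mul]
      exact mul_inv_le_one_of_le₀ hm hr.le)
    (fun _ _ => inv_pos.2 hr)
  rw [← Finset.sum_mul, sum_pr, hμ.2, Real.logb_inv,
    Real.logb_rpow two_pos (by norm_num)] at h
  linarith

/-- Subadditivity of entropy. -/
lemma ent_pair_le {A B : Type*} [Fintype A] [Fintype B] {μ : Ω → ℝ} (hμ : IsPMF μ)
    (f : Ω → A) (g : Ω → B) : ent μ (fun ω => (f ω, g ω)) ≤ ent μ f + ent μ g := by
  have h := ent_le_crossEntropy hμ (fun ω => (f ω, g ω))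
    (fun ab => pr μ (fun ω => f ω = ab.1) * pr μ (fun ω => g ω = ab.2))
    (fun ab => mul_nonneg (pr_nonneg hμ.1 _) (pr_nonneg hμ.1 _))
    (by
      rw [Fintype.sum_prod_type]
      simp only [← Finset.mul_sum, sum_pr, hμ.2, mul_one, le_refl])
    (fun ab hab => mul_pos
      (lt_of_lt_of_le hab (pr_mono hμ.1 fun ω h => congrArg Prod.fst h))
      (lt_of_lt_of_le hab (pr_mono hμ.1 fun ω h => congrArg Prod.snd h)))
  refine h.trans (le_of_eq ?_)
  rw [sum_pr_mul μ (fun ω => (f ω, g ω)) (fun ab => Real.logb 2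
    (pr μ (fun ω => f ω = ab.1) * pr μ (fun ω => g ω = ab.2))), ent_eq_sum μ f, ent_eq_sum μ g,
    ← neg_add, ← Finset.sum_add_distrib]
  congr 1
  refine Finset.sum_congr rfl fun ω _ => ?_
  rcases (hμ.1 ω).eq_or_lt with h0 | h0
  · simp [← h0]
  · have hf : 0 < pr μ (fun ω' => f ω' = f ω) := pr_pos hμ.1 h0 rfl
    have hg : 0 < pr μ (fun ω' => g ω' = g ω) := pr_pos hμ.1 h0 rfl
    rw [Real.logb_mul hf.ne' hg.ne', mul_add]

/-- The entropy form `H(f, g, h) + H(g) = H(f, g) + H(g, h)` of a Markov chain `f − g − h`. -/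
lemma CondIndep.ent_eq {A B C : Type*} [Fintype A] [Fintype B] [Fintype C] {μ : Ω → ℝ}
    (hμ : ∀ ω, 0 ≤ μ ω) {f : Ω → A} {g : Ω → B} {h : Ω → C} (hI : CondIndep μ f g h) :
    ent μ (fun ω => (f ω, g ω, h ω)) + ent μ g
      = ent μ (fun ω => (f ω, g ω)) + ent μ (fun ω => (g ω, h ω)) := by
  simp only [ent_eq_sum, ← neg_add, ← Finset.sum_add_distrib, Prod.mk.injEq]
  congr 1
  refine Finset.sum_congr rfl fun ω _ => ?_
  rcases (hμ ω).eq_or_lt with h0 | h0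
  · simp [← h0]
  · rw [← mul_add, ← mul_add, ← Real.logb_mul, ← Real.logb_mul, hI]
    all_goals exact (pr_pos hμ h0 (by simp)).ne'

/-- If a measure-preserving exchange of two independent copies `s`, `s'` swaps the values of `h`
and keeps those of `f` and `g` whenever `g s = g s'`, then `f` and `h` are conditionally independent
given `g`. -/
lemma condIndep_of_swap {A B C : Type*} {μ : Ω → ℝ} {f : Ω → A} {g : Ω → B} {h : Ω → C}
    (φ : Ω → Ω → Ω) (hφ : ∀ s s', φ (φ s s') (φ s' s) = s)
    (hμφ : ∀ s s', μ (φ s s') * μ (φ s' s) = μ s * μ s')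
    (hf : ∀ s s', g s = g s' → f (φ s s') = f s)
    (hg : ∀ s s', g s = g s' → g (φ s s') = g s)
    (hh : ∀ s s', g s = g s' → h (φ s s') = h s') : CondIndep μ f g h := by
  intro a b c
  simp only [pr, Finset.sum_mul_sum, ← Fintype.sum_prod_type']
  refine Fintype.sum_equiv
    ⟨fun q => (φ q.1 q.2, φ q.2 q.1), fun q => (φ q.1 q.2, φ q.2 q.1),
      fun q => Prod.ext (hφ _ _) (hφ _ _), fun q => Prod.ext (hφ _ _) (hφ _ _)⟩ _ _ ?_
  rintro ⟨s, s'⟩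
  have key : ((f s = a ∧ g s = b ∧ h s = c) ∧ g s' = b) ↔
      ((f (φ s s') = a ∧ g (φ s s') = b) ∧ (g (φ s' s) = b ∧ h (φ s' s) = c)) := by
    constructor
    · rintro ⟨⟨h1, h2, h3⟩, h4⟩
      have e : g s = g s' := h2.trans h4.symm
      exact ⟨⟨(hf s s' e).trans h1, (hg s s' e).trans h2⟩,
        (hg s' s e.symm).trans h4, (hh s' s e.symm).trans h3⟩
    · rintro ⟨⟨h1, h2⟩, h3, h4⟩
      -- The exchange is an involution, so the hypotheses apply to the exchanged pair as well.
      have e : g (φ s s') = g (φ s' s) := h2.trans h3.symm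
      have f1 := hf _ _ e
      have g1 := hg _ _ e
      have g2 := hg _ _ e.symm
      have h5 := hh _ _ e
      rw [hφ] at f1 g1 g2 h5
      exact ⟨⟨f1.trans h1, g1.trans h2, h5.trans h4⟩, g2.trans h3⟩
  simp only [Equiv.coe_fn_mk, ite_zero_mul_ite_zero, hμφ]
  exact if_congr key rfl rfl

/-! ### The Markov chain and the chain rule for the i.i.d. source -/

lemma prodPMF_isPMF [Fintype X] [Fintype Y] {p : X × Y → ℝ} (hp : IsPMF p) (n : ℕ) :
    IsPMF (prodPMF p n) := by
  refine ⟨fun s => Finset.prod_nonneg fun i _ => hp.1 _, ?_⟩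
  simp only [prodPMF]
  rw [← Fintype.piFinset_univ, ← Finset.prod_univ_sum]
  simp [hp.2]

/-- The Markov chain `X_i − (X^{i−1}, M, Y_i^n) − Y^{i−1}` for every function `M` of `(X^n, Y^n)`
whose level sets have the rectangle property. -/
lemma condIndep_of_rectangle [Fintype X] [Fintype Y] {B : Type*} {n : ℕ} (p : X × Y → ℝ)
    (M : (Fin n → X) → (Fin n → Y) → B)
    (hM : ∀ x y x' y', M x y = M x' y' → M x y' = M x y) (i : Fin n) :
    CondIndep (prodPMF p n) (fun s => (s i).1)
      (fun s => ((fun i' : {i' : Fin n // i' < i} => (s i'.1).1), M (xs s) (ys s),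
                 (fun i' : {i' : Fin n // i ≤ i'} => (s i'.1).2)))
      (fun s => fun i' : {i' : Fin n // i' < i} => (s i'.1).2) := by
  refine condIndep_of_swap (fun s s' l => if l < i then s' l else s l) ?_ ?_ ?_ ?_ ?_
  · intro s s'
    funext l
    by_cases hl : l < i <;> simp [hl]
  · intro s s'
    simp only [prodPMF, ← Finset.prod_mul_distrib]
    refine Finset.prod_congr rfl fun l _ => ?_
    by_cases hl : l < i <;> simp [hl, mul_comm]
  · intro s s' _
    simp
  · intro s s' h
    simp only [Prod.mk.injEq] at h
    obtain ⟨h1, h2, h3⟩ := h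
    have hx : xs (fun l => if l < i then s' l else s l) = xs s := by
      funext l
      by_cases hl : l < i
      · simpa [xs, hl] using (congrFun h1 ⟨l, hl⟩).symm
      · simp [xs, hl]
    have hy : ys (fun l => if l < i then s' l else s l) = ys s' := by
      funext l
      by_cases hl : l < i
      · simp [ys, hl]
      · simpa [ys, hl] using congrFun h3 ⟨l, not_lt.1 hl⟩
    simp only [Prod.mk.injEq]
    refine ⟨?_, ?_, ?_⟩
    · funext l
      exact congrFun hx l.1
    · rw [hx, hy]
      exact hM _ _ _ _ h2
    · funext l
      simp [not_lt.2 l.2]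
  · intro s s' _
    funext l
    simp [l.2]

/-- The chain rule `H(X^n | M, Y^n) = ∑ i, H(X_i | X^{i−1}, M, Y_i^n)`, in which the Markov chain
removes `Y^{i−1}` from the conditioning. -/
lemma condEnt_eq_sum [Fintype X] [Fintype Y] {B : Type*} [Fintype B] {n : ℕ} {p : X × Y → ℝ}
    (hp : IsPMF p) (M : (Fin n → X) → (Fin n → Y) → B)
    (hM : ∀ x y x' y', M x y = M x' y' → M x y' = M x y) :
    condEnt (prodPMF p n) (fun s => xs s) (fun s => (M (xs s) (ys s), ys s)) =
      ∑ i : Fin n, condEnt (prodPMF p n) (fun s => (s i).1)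
        (fun s => ((fun i' : {i' : Fin n // i' < i} => (s i'.1).1), M (xs s) (ys s),
                   (fun i' : {i' : Fin n // i ≤ i'} => (s i'.1).2))) := by
  -- `F m` is the joint entropy of the first `m` letters of `X^n` with `M` and `Y^n`.
  let F : ℕ → ℝ := fun m => ent (prodPMF p n)
    (fun s => ((fun i' : {i' : Fin n // i'.val < m} => (s i'.1).1), M (xs s) (ys s), ys s))
  have hstep : ∀ i : Fin n, condEnt (prodPMF p n) (fun s => (s i).1)
        (fun s => ((fun i' : {i' : Fin n // i' < i} => (s i'.1).1), M (xs s) (ys s),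
                   (fun i' : {i' : Fin n // i ≤ i'} => (s i'.1).2)))
        = F (i.val + 1) - F i.val := by
    intro i
    have h := (condIndep_of_rectangle p M hM i).ent_eq (prodPMF_isPMF hp n).1
    have e1 := ent_congr (prodPMF p n)
      (f := fun s => ((s i).1, ((fun i' : {i' : Fin n // i' < i} => (s i'.1).1), M (xs s) (ys s),
        (fun i' : {i' : Fin n // i ≤ i'} => (s i'.1).2)),
        fun i' : {i' : Fin n // i' < i} => (s i'.1).2))
      (g := fun s => ((fun i' : {i' : Fin n // i'.val < i.val + 1} => (s i'.1).1),
        M (xs s) (ys s), ys s)) (by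
        intro s s'
        simp only [Prod.mk.injEq, funext_iff, Subtype.forall, ys]
        constructor
        · rintro ⟨h1, ⟨h2, h3, h4⟩, h5⟩
          refine ⟨fun l hl => ?_, h3, fun l => ?_⟩
          · rcases Nat.lt_succ_iff_lt_or_eq.1 hl with hl | hl
            · exact h2 l hl
            · rw [Fin.ext hl]
              exact h1
          · rcases lt_or_ge l i with hl | hl
            · exact h5 l hl
            · exact h4 l hl
        · rintro ⟨h1, h2, h3⟩
          exact ⟨h1 i (Nat.lt_succ_self _), ⟨fun l hl => h1 l (Nat.lt_succ_of_lt hl), h2,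
            fun l _ => h3 l⟩, fun l _ => h3 l⟩)
    have e2 := ent_congr (prodPMF p n)
      (f := fun s => (((fun i' : {i' : Fin n // i' < i} => (s i'.1).1), M (xs s) (ys s),
        (fun i' : {i' : Fin n // i ≤ i'} => (s i'.1).2)),
        fun i' : {i' : Fin n // i' < i} => (s i'.1).2))
      (g := fun s => ((fun i' : {i' : Fin n // i'.val < i.val} => (s i'.1).1),
        M (xs s) (ys s), ys s)) (by
        intro s s'
        simp only [Prod.mk.injEq, funext_iff, Subtype.forall, ys]
        constructor
        · rintro ⟨⟨h2, h3, h4⟩, h5⟩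
          refine ⟨fun l hl => h2 l hl, h3, fun l => ?_⟩
          rcases lt_or_ge l i with hl | hl
          · exact h5 l hl
          · exact h4 l hl
        · rintro ⟨h1, h2, h3⟩
          exact ⟨⟨fun l hl => h1 l hl, h2, fun l _ => h3 l⟩, fun l _ => h3 l⟩)
    rw [e1, e2] at h
    simp only [condEnt, F]
    linarith
  rw [Finset.sum_congr rfl fun i _ => hstep i, Fin.sum_univ_eq_sum_range
    (fun m => F (m + 1) - F m) n, Finset.sum_range_sub]
  simp only [condEnt, F]
  congr 1
  · refine ent_congr _ fun s s' => ?_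
    simp [funext_iff, xs]
  · refine ent_congr _ fun s s' => ?_
    simp [funext_iff]

/-! ### Transcripts of an interactive code -/

/-- The rectangle property of interactive communication: if the inputs `(x, y)` and `(x', y')`
produce the same messages in an initial segment `P` of the rounds, then so does `(x, y')`. -/
lemma transcript_rectangle {t n : ℕ} {k : Fin t → ℕ}
    {msg : (Fin n → X) → (Fin n → Y) → ∀ j : Fin t, Fin (k j)} (hmsg : ValidCode msg)
    {P : Fin t → Prop} (hP : ∀ i j, i < j → P j → P i) (x x' : Fin n → X) (y y' : Fin n → Y)
    (h : ∀ i, P i → msg x y i = msg x' y' i) : ∀ i, P i → msg x y' i = msg x y i := by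
  intro i
  induction i using WellFoundedLT.induction with
  | ind i ih =>
    intro hi
    rcases Nat.even_or_odd i.val with he | ho
    · exact (hmsg i).1 he x y' y fun l hl => ih l hl (hP l i hl hi)
    · rw [h i hi]
      exact (hmsg i).2 ho x x' y' fun l hl =>
        (ih l hl (hP l i hl hi)).trans (h l (hP l i hl hi))

/-- **Single-letterization step in the converse of Theorem 1.** For every odd round `j`
(round number `j.val + 1`, so `j.val` is even),
`n·R_j ≥ H(M_j) ≥ I(X^n; M_j | M^{j−1}, Y^n)
  = Σ_{i=1}^n [H(X_i | X^{i−1}, M^{j−1}, Y_i^n) − H(X_i | X^{i−1}, M^{j}, Y_i^n)]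
  = Σ_{i=1}^n I(X_i; M_j | X^{i−1}, M^{j−1}, Y_i^n)`. -/
theorem single_letterization_step
    {X Y : Type*} [Fintype X] [Fintype Y]
    (p : X × Y → ℝ) (hp : IsPMF p)
    {t n : ℕ} {k : Fin t → ℕ}
    (msg : (Fin n → X) → (Fin n → Y) → ∀ j : Fin t, Fin (k j))
    (hmsg : ValidCode msg)
    (R : Fin t → ℝ) (j : Fin t) (hj : Even j.val)
    (hkj : (k j : ℝ) ≤ (2 : ℝ) ^ ((n : ℝ) * R j)) :
    (n : ℝ) * R j ≥ ent (prodPMF p n) (fun s => msg (xs s) (ys s) j) ∧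
    ent (prodPMF p n) (fun s => msg (xs s) (ys s) j) ≥
      condMI (prodPMF p n)
        (fun s => xs s)
        (fun s => msg (xs s) (ys s) j)
        (fun s => ((fun i : {i : Fin t // i < j} => msg (xs s) (ys s) i.1), ys s)) ∧
    condMI (prodPMF p n)
        (fun s => xs s)
        (fun s => msg (xs s) (ys s) j)
        (fun s => ((fun i : {i : Fin t // i < j} => msg (xs s) (ys s) i.1), ys s)) =
      ∑ i : Fin n,
        (condEnt (prodPMF p n) (fun s => (s i).1)
          (fun s => ((fun i' : {i' : Fin n // i' < i} => (s i'.1).1),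
                     (fun j' : {j' : Fin t // j' < j} => msg (xs s) (ys s) j'.1),
                     (fun i' : {i' : Fin n // i ≤ i'} => (s i'.1).2))) -
         condEnt (prodPMF p n) (fun s => (s i).1)
          (fun s => ((fun i' : {i' : Fin n // i' < i} => (s i'.1).1),
                     (fun j' : {j' : Fin t // j' ≤ j} => msg (xs s) (ys s) j'.1),
                     (fun i' : {i' : Fin n // i ≤ i'} => (s i'.1).2)))) ∧
    (∑ i : Fin n,
        (condEnt (prodPMF p n) (fun s => (s i).1)
          (fun s => ((fun i' : {i' : Fin n // i' < i} => (s i'.1).1),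
                     (fun j' : {j' : Fin t // j' < j} => msg (xs s) (ys s) j'.1),
                     (fun i' : {i' : Fin n // i ≤ i'} => (s i'.1).2))) -
         condEnt (prodPMF p n) (fun s => (s i).1)
          (fun s => ((fun i' : {i' : Fin n // i' < i} => (s i'.1).1),
                     (fun j' : {j' : Fin t // j' ≤ j} => msg (xs s) (ys s) j'.1),
                     (fun i' : {i' : Fin n // i ≤ i'} => (s i'.1).2))))) =
      ∑ i : Fin n,
        condMI (prodPMF p n) (fun s => (s i).1)
          (fun s => msg (xs s) (ys s) j)
          (fun s => ((fun i' : {i' : Fin n // i' < i} => (s i'.1).1),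
                     (fun j' : {j' : Fin t // j' < j} => msg (xs s) (ys s) j'.1),
                     (fun i' : {i' : Fin n // i ≤ i'} => (s i'.1).2))) := by
  have hμ := prodPMF_isPMF hp n
  have hrect : ∀ (P : Fin t → Prop), (∀ i j, i < j → P j → P i) → ∀ x y x' y',
      (fun i : {i : Fin t // P i} => msg x y i.1) = (fun i : {i : Fin t // P i} => msg x' y' i.1) →
      (fun i : {i : Fin t // P i} => msg x y' i.1)
        = (fun i : {i : Fin t // P i} => msg x y i.1) := by
    intro P hP x y x' y' h
    funext i
    exact transcript_rectangle hmsg hP x x' y y' (fun l hl => congrFun h ⟨l, hl⟩) i.1 i.2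
  -- Listing `M_j` next to `M^{j-1}` carries the same information as `M^j`.
  have hMj : ∀ s s' : Fin n → X × Y,
      (msg (xs s) (ys s) j = msg (xs s') (ys s') j ∧
        ∀ l, l < j → msg (xs s) (ys s) l = msg (xs s') (ys s') l) ↔
      ∀ l, l ≤ j → msg (xs s) (ys s) l = msg (xs s') (ys s') l := by
    intro s s'
    constructor
    · rintro ⟨h1, h2⟩ l hl
      rcases hl.lt_or_eq with hl | rfl
      · exact h2 l hl
      · exact h1
    · intro h
      exact ⟨h j le_rfl, fun l hl => h l hl.le⟩
  refine ⟨ent_le_of_card hμ _ hkj, ?_, ?_, ?_⟩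
  · have h := ent_pair_le hμ (fun s => msg (xs s) (ys s) j)
      (fun s => ((fun i : {i : Fin t // i < j} => msg (xs s) (ys s) i.1), ys s))
    have e := ent_congr (prodPMF p n)
      (f := fun s => (xs s, msg (xs s) (ys s) j,
        (fun i : {i : Fin t // i < j} => msg (xs s) (ys s) i.1), ys s))
      (g := fun s => (xs s, (fun i : {i : Fin t // i < j} => msg (xs s) (ys s) i.1), ys s)) (by
        intro s s'
        simp only [Prod.mk.injEq]
        constructor
        · rintro ⟨h1, -, h2⟩
          exact ⟨h1, h2⟩
        · rintro ⟨h1, h2, h3⟩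
          exact ⟨h1, by rw [h1, h3], h2, h3⟩)
    simp only [condMI, condEnt]
    linarith
  · rw [Finset.sum_sub_distrib,
      ← condEnt_eq_sum hp (fun x y => fun i : {i : Fin t // i < j} => msg x y i.1)
        (hrect (· < j) fun _ _ h h' => h.trans h'),
      ← condEnt_eq_sum hp (fun x y => fun i : {i : Fin t // i ≤ j} => msg x y i.1)
        (hrect (· ≤ j) fun _ _ h h' => h.le.trans h')]
    simp only [condMI, condEnt]
    congr 2
    · refine ent_congr _ fun s s' => ?_
      simp only [Prod.mk.injEq, funext_iff (f := fun i : {i : Fin t // _} => _), Subtype.forall,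
        ← hMj s s', and_assoc]
    · refine ent_congr _ fun s s' => ?_
      simp only [Prod.mk.injEq, funext_iff (f := fun i : {i : Fin t // _} => _), Subtype.forall,
        ← hMj s s', and_assoc]
  · refine Finset.sum_congr rfl fun i _ => ?_
    simp only [condMI, condEnt]
    congr 2
    · refine ent_congr _ fun s s' => ?_
      simp only [Prod.mk.injEq, funext_iff, Subtype.forall, ← hMj s s']
      tauto
    · refine ent_congr _ fun s s' => ?_
      simp only [Prod.mk.injEq, funext_iff, Subtype.forall, ← hMj s s']
      tauto

end IFC

end
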